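/- Let λ > 0, let x_t ∈ ℝ^d, and let x_1, …, x_m ∈ ℝ^d with m ≥ 1 (the negative examples received before round t, with y_t = +1). Set L_t(w) = (λ/2)‖w‖₂² + (1/(2m)) Σ_{i=1}^m (1 − (x_t − x_i)·w)², c⁻ = (1/m) Σ_{i=1}^m x_i, and S⁻ = (1/m) Σ_{i=1}^m (x_i x_iᵀ − c⁻ (c⁻)ᵀ). Then for every w ∈ ℝ^d, the gradient of L_t at w equals ∇L_t(w) = λw − x_t + c⁻ + (x_t − c⁻)(x_t − c⁻)ᵀ w + S⁻ w. -/

import Mathlib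

open Finset
open scoped RealInnerProductSpace

/-! The gradient of the loss at `w` is `lam • w` minus the mean of the `xt - x i`, plus the second
moment of the sample about `xt` applied to `w`. By the parallel axis theorem
(`sum_bilin_sub_sub`) this second moment is the covariance plus the outer square of `xt - c`, where
`c` is the sample mean. -/

section Gradient

variable {𝕜 F : Type*} [RCLike 𝕜] [NormedAddCommGroup F] [InnerProductSpace 𝕜 F] [CompleteSpace F]

theorem hasGradientAt_add {f g : F → 𝕜} {f' g' w : F} (hf : HasGradientAt f f' w)
    (hg : HasGradientAt g g' w) : HasGradientAt (fun v => f v + g v) (f' + g') w := by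
  rw [hasGradientAt_iff_hasFDerivAt, map_add]
  exact hf.hasFDerivAt.fun_add hg.hasFDerivAt

theorem hasGradientAt_sum {ι : Type*} {s : Finset ι} {f : ι → F → 𝕜} {f' : ι → F} {w : F}
    (hf : ∀ i ∈ s, HasGradientAt (f i) (f' i) w) :
    HasGradientAt (fun v => ∑ i ∈ s, f i v) (∑ i ∈ s, f' i) w := by
  rw [hasGradientAt_iff_hasFDerivAt, map_sum]
  exact HasFDerivAt.fun_sum fun i hi => (hf i hi).hasFDerivAt

theorem hasGradientAt_const_mul {f : F → 𝕜} {f' w : F} (r : 𝕜) (hf : HasGradientAt f f' w) :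
    HasGradientAt (fun v => r * f v) (starRingEnd 𝕜 r • f') w := by
  rw [hasGradientAt_iff_hasFDerivAt, map_smulₛₗ, RCLike.conj_conj]
  exact hf.hasFDerivAt.const_mul r

variable {E : Type*} [NormedAddCommGroup E] [InnerProductSpace ℝ E] [CompleteSpace E]

theorem hasGradientAt_norm_sq (w : E) : HasGradientAt (fun v : E => ‖v‖ ^ 2) ((2 : ℝ) • w) w := by
  rw [hasGradientAt_iff_hasFDerivAt]
  refine (hasStrictFDerivAt_norm_sq w).hasFDerivAt.congr_fderiv ?_
  ext v
  simp

theorem hasGradientAt_const_sub_inner_sq (b : ℝ) (a w : E) :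
    HasGradientAt (fun v => (b - ⟪a, v⟫) ^ 2) (-(2 * (b - ⟪a, w⟫)) • a) w := by
  rw [hasGradientAt_iff_hasFDerivAt]
  refine (((innerSL ℝ a).hasFDerivAt (x := w)).const_sub b |>.pow 2).congr_fderiv ?_
  ext v
  simp

end Gradient

theorem sum_bilin_sub_sub {R M N ι : Type*} [CommRing R] [AddCommGroup M] [AddCommGroup N]
    [Module R M] [Module R N] (B : M →ₗ[R] M →ₗ[R] N) (s : Finset ι) (x : ι → M) {c : M}
    (hc : ∑ i ∈ s, x i = s.card • c) (u : M) :
    ∑ i ∈ s, B (u - x i) (u - x i) =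
      s.card • B (u - c) (u - c) + ∑ i ∈ s, (B (x i) (x i) - B c c) := by
  have hdev : ∑ i ∈ s, (x i - c) = 0 := by
    rw [sum_sub_distrib, sum_const, hc, sub_self]
  have hcross : ∑ i ∈ s, (B u (x i - c) + B (x i - c) u) = 0 := by
    rw [sum_add_distrib, ← map_sum, ← LinearMap.sum_apply, ← map_sum, hdev, map_zero, map_zero,
      LinearMap.zero_apply, add_zero]
  calc ∑ i ∈ s, B (u - x i) (u - x i)
      = ∑ i ∈ s, (B (u - c) (u - c) + (B (x i) (x i) - B c c)
          - (B u (x i - c) + B (x i - c) u)) := by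
        refine sum_congr rfl fun i _ => ?_
        simp only [map_sub, LinearMap.sub_apply]
        abel
    _ = s.card • B (u - c) (u - c) + ∑ i ∈ s, (B (x i) (x i) - B c c) := by
        rw [sum_sub_distrib, hcross, sub_zero, sum_add_distrib, sum_const]

section Mean

variable {ι E : Type*} [Fintype ι] [AddCommGroup E] [Module ℝ E]

/-- The mean of a finite family of vectors: the class mean `c⁻` of the paper. It is `0` for the
empty family. -/
noncomputable def sampleMean (x : ι → E) : E :=
  (Fintype.card ι : ℝ)⁻¹ • ∑ i, x i

theorem sampleMean_sub (x y : ι → E) :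
    sampleMean (fun i => x i - y i) = sampleMean x - sampleMean y := by
  simp only [sampleMean, sum_sub_distrib, smul_sub]

variable [Nonempty ι]

theorem inv_card_smul_card_nsmul (u : E) : (Fintype.card ι : ℝ)⁻¹ • Fintype.card ι • u = u := by
  rw [← Nat.cast_smul_eq_nsmul ℝ, inv_smul_smul₀ (Nat.cast_ne_zero.2 Fintype.card_ne_zero)]

theorem sampleMean_const (u : E) : sampleMean (fun _ : ι => u) = u := by
  rw [sampleMean, sum_const, card_univ, inv_card_smul_card_nsmul]

theorem sum_eq_card_nsmul_sampleMean (x : ι → E) :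
    ∑ i, x i = Fintype.card ι • sampleMean x := by
  rw [sampleMean, smul_comm, inv_card_smul_card_nsmul]

end Mean

section Loss

open InnerProductSpace (rankOne rankOne_apply)

variable {ι E : Type*} [Fintype ι] [NormedAddCommGroup E] [InnerProductSpace ℝ E]

/-- The covariance of a finite family of vectors, as a continuous linear operator: the class
covariance matrix `S⁻` of the paper, with `rankOne ℝ a a` for the outer product `a aᵀ`. -/
noncomputable def sampleCovariance (x : ι → E) : E →L[ℝ] E :=
  (Fintype.card ι : ℝ)⁻¹ •
    ∑ i, (rankOne ℝ (x i) (x i) - rankOne ℝ (sampleMean x) (sampleMean x))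

/-- The regularized pairwise square loss `L_t` of the paper, for a positive example `xt` and the
negative examples `x i`. -/
noncomputable def pairwiseSquareLoss (lam : ℝ) (xt : E) (x : ι → E) (v : E) : ℝ :=
  lam / 2 * ‖v‖ ^ 2 + 1 / (2 * (Fintype.card ι : ℝ)) * ∑ i, (1 - ⟪xt - x i, v⟫) ^ 2

theorem sampleMean_inner_sub_smul_sub [Nonempty ι] (x : ι → E) (u w : E) :
    sampleMean (fun i => ⟪u - x i, w⟫ • (u - x i)) =
      rankOne ℝ (u - sampleMean x) (u - sampleMean x) w + sampleCovariance x w := by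
  have hmoment := sum_bilin_sub_sub (LinearMap.lsmul ℝ E ∘ₗ (innerₗ E).flip w) univ x
    (sum_eq_card_nsmul_sampleMean x) u
  simp only [LinearMap.comp_apply, LinearMap.lsmul_apply, LinearMap.flip_apply, innerₗ_apply_apply,
    card_univ] at hmoment
  rw [sampleMean, hmoment, smul_add, inv_card_smul_card_nsmul]
  simp only [sampleCovariance, rankOne_apply, smul_apply, _root_.sum_apply, sub_apply]

theorem hasGradientAt_pairwiseSquareLoss [CompleteSpace E] (lam : ℝ) (xt : E) (x : ι → E) (w : E) :
    HasGradientAt (pairwiseSquareLoss lam xt x)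
      (lam • w - sampleMean (fun i => (1 - ⟪xt - x i, w⟫) • (xt - x i))) w := by
  have hreg := hasGradientAt_const_mul (lam / 2) (hasGradientAt_norm_sq w)
  have hfit := hasGradientAt_const_mul (1 / (2 * (Fintype.card ι : ℝ)))
    (hasGradientAt_sum fun i (_ : i ∈ univ) => hasGradientAt_const_sub_inner_sq 1 (xt - x i) w)
  have hgrad : lam • w - sampleMean (fun i => (1 - ⟪xt - x i, w⟫) • (xt - x i)) =
      (lam / 2) • (2 : ℝ) • w + (1 / (2 * (Fintype.card ι : ℝ))) •
        ∑ i, -(2 * (1 - ⟪xt - x i, w⟫)) • (xt - x i) := by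
    simp only [sampleMean, neg_smul, mul_smul, sum_neg_distrib, ← smul_sum]
    module
  rw [hgrad]
  exact hasGradientAt_add hreg hfit

theorem auc_gradient_mean_covariance_identity_general [CompleteSpace E] [Nonempty ι] (lam : ℝ)
    (xt : E) (x : ι → E) (w : E) :
    HasGradientAt (pairwiseSquareLoss lam xt x)
      (lam • w - xt + sampleMean x + rankOne ℝ (xt - sampleMean x) (xt - sampleMean x) w
        + sampleCovariance x w) w := by
  have hmean : sampleMean (fun i => (1 - ⟪xt - x i, w⟫) • (xt - x i)) =
      xt - sampleMean x - (rankOne ℝ (xt - sampleMean x) (xt - sampleMean x) w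
        + sampleCovariance x w) := by
    simp only [sub_smul (1 : ℝ), one_smul]
    rw [sampleMean_sub, sampleMean_sub, sampleMean_const, sampleMean_inner_sub_smul_sub]
  convert hasGradientAt_pairwiseSquareLoss lam xt x w using 1
  rw [hmean]
  abel

end Loss

section Coordinates

open InnerProductSpace (rankOne rankOne_apply)
open scoped Matrix
open WithLp (ofLp)

theorem ofLp_rankOne_apply {𝕜 m n : Type*} [RCLike 𝕜] [Fintype m] [Fintype n]
    (a : EuclideanSpace 𝕜 m) (b w : EuclideanSpace 𝕜 n) :
    ofLp (rankOne 𝕜 a b w) = Matrix.vecMulVec (ofLp a) (star (ofLp b)) *ᵥ ofLp w := by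
  rw [rankOne_apply, Matrix.vecMulVec_mulVec, EuclideanSpace.inner_eq_star_dotProduct,
    dotProduct_comm, WithLp.ofLp_smul, op_smul_eq_smul]

theorem ofLp_sampleCovariance_apply {ι n : Type*} [Fintype ι] [Fintype n]
    (x : ι → EuclideanSpace ℝ n) (w : EuclideanSpace ℝ n) :
    ofLp (sampleCovariance x w) =
      ((Fintype.card ι : ℝ)⁻¹ • ∑ i, (Matrix.vecMulVec (ofLp (x i)) (ofLp (x i))
        - Matrix.vecMulVec (ofLp (sampleMean x)) (ofLp (sampleMean x)))) *ᵥ ofLp w := by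
  simp only [sampleCovariance, smul_apply, _root_.sum_apply, sub_apply, WithLp.ofLp_smul,
    WithLp.ofLp_sum, WithLp.ofLp_sub, ofLp_rankOne_apply, star_trivial, Matrix.smul_mulVec,
    Matrix.sum_mulVec, Matrix.sub_mulVec]

end Coordinates

/-- Gradient identity (Equation (3) of the paper): for the per-round loss
`L v = λ/2 ‖v‖² + (1/(2m)) ∑_i (1 - (x_t - x_i)·v)²` built from the negative examples
`x 1, …, x m` (round `t` with `y t = +1`), with class mean `c⁻ = (1/m) ∑ x_i` and class
covariance `S⁻ = (1/m) ∑ (x_i x_iᵀ - c⁻ c⁻ᵀ)`, the gradient at any `w` equals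
`λ w - x_t + c⁻ + (x_t - c⁻)(x_t - c⁻)ᵀ w + S⁻ w` (outer products acting as matrices). -/
theorem auc_gradient_mean_covariance_identity (d m : ℕ) (hm : 0 < m)
    (lam : ℝ) (hlam : 0 < lam)
    (xt : EuclideanSpace ℝ (Fin d)) (x : Fin m → EuclideanSpace ℝ (Fin d))
    (L : EuclideanSpace ℝ (Fin d) → ℝ)
    (hL : ∀ v, L v =
      lam / 2 * ‖v‖ ^ 2 +
        (1 / (2 * (m : ℝ))) * ∑ i : Fin m, (1 - ⟪xt - x i, v⟫) ^ 2)
    (c : EuclideanSpace ℝ (Fin d)) (hc : c = (m : ℝ)⁻¹ • ∑ i : Fin m, x i)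
    (S : Matrix (Fin d) (Fin d) ℝ)
    (hS : S = (m : ℝ)⁻¹ •
      ∑ i : Fin m,
        (Matrix.vecMulVec (fun k => x i k) (fun k => x i k)
          - Matrix.vecMulVec (fun k => c k) (fun k => c k)))
    (w : EuclideanSpace ℝ (Fin d)) :
    ∀ k : Fin d,
      gradient L w k =
        lam * w k - xt k + c k
          + ((Matrix.vecMulVec (fun j => xt j - c j) (fun j => xt j - c j)).mulVec
              (fun j => w j)) k
          + (S.mulVec (fun j => w j)) k := by
  intro k
  have : Nonempty (Fin m) := Fin.pos_iff_nonempty.1 hm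
  obtain rfl : L = pairwiseSquareLoss lam xt x := funext fun v => by
    rw [hL, pairwiseSquareLoss, Fintype.card_fin]
  obtain rfl : c = sampleMean x := by rw [hc, sampleMean, Fintype.card_fin]
  have hcov : sampleCovariance x w k = S.mulVec (fun j => w j) k := by
    rw [hS, ofLp_sampleCovariance_apply, Fintype.card_fin]
  have hout : InnerProductSpace.rankOne ℝ (xt - sampleMean x) (xt - sampleMean x) w k =
      (Matrix.vecMulVec (fun j => xt j - sampleMean x j) (fun j => xt j - sampleMean x j)).mulVec
        (fun j => w j) k := by
    rw [ofLp_rankOne_apply]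
    rfl
  rw [(auc_gradient_mean_covariance_identity_general lam xt x w).gradient, ← hcov, ← hout]
  rfl
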